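/- Let p, q ∈ ℝ^d be probability vectors with strictly positive entries, and for n ∈ ℕ let p^{⊗n}, q^{⊗n} ∈ ℝ^{d^n} denote their n-fold tensor powers. Define the smoothed max-divergence D_∞^ε(p^{⊗n} ‖ q^{⊗n}) = inf { D_∞(p̃ ‖ q^{⊗n}) : p̃ a probability vector on d^n outcomes with d(p̃, p^{⊗n}) ≤ ε }, where D_∞(p̃‖Q) = ln max_i (p̃_i/Q_i). Then lim_{ε→0^+} lim_{n→∞} (1/n) D_∞^ε(p^{⊗n} ‖ q^{⊗n}) = D_1(p ‖ q) = ∑_i p_i ln(p_i/q_i). -/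

import Mathlib

open scoped BigOperators Topology
open Filter

/-- A probability vector: nonnegative entries summing to 1. -/
def IsProbVec {ι : Type*} [Fintype ι] (p : ι → ℝ) : Prop :=
  (∀ i, 0 ≤ p i) ∧ ∑ i, p i = 1

/-- The sum of the `k` largest entries of `p`, as the supremum of sums over subsets of size `k`. -/
noncomputable def topSum {ι : Type*} [Fintype ι] (p : ι → ℝ) (k : ℕ) : ℝ :=
  sSup {x : ℝ | ∃ s : Finset ι, s.card = k ∧ x = ∑ i ∈ s, p i}

/-- `p` majorizes `p'`: for every `1 ≤ k ≤ d`, the sum of the `k` largest entries of `p`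
is at least that of `p'`. -/
def Majorizes {ι : Type*} [Fintype ι] (p p' : ι → ℝ) : Prop :=
  ∀ k : ℕ, 1 ≤ k → k ≤ Fintype.card ι → topSum p' k ≤ topSum p k

/-- A column-stochastic matrix: nonnegative entries, each column sums to 1. -/
def ColStochastic {ι κ : Type*} [Fintype ι] [Fintype κ] (Λ : Matrix ι κ ℝ) : Prop :=
  (∀ i j, 0 ≤ Λ i j) ∧ ∀ j, ∑ i, Λ i j = 1

/-- A bistochastic (doubly stochastic) matrix. -/
def Bistochastic {ι : Type*} [Fintype ι] (A : Matrix ι ι ℝ) : Prop :=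
  (∀ i j, 0 ≤ A i j) ∧ (∀ i, ∑ j, A i j = 1) ∧ (∀ j, ∑ i, A i j = 1)

/-- Real power with the convention `0 ^ a = 0` (in particular `0 ^ 0 = 0`). -/
noncomputable def rpow0 (x a : ℝ) : ℝ := if x = 0 then 0 else x ^ a

/-- The classical Rényi divergence `D_α(p‖q)`, with the conventions `0^0 = 0`, `0·ln 0 = 0`;
for `α < 0` the prefactor is `1/(1-α)`, for `α ∈ [0,1)∪(1,∞)` it is `1/(α-1)`,
and `D_1` is the Kullback–Leibler divergence. -/
noncomputable def renyiD {ι : Type*} [Fintype ι] (α : ℝ) (p q : ι → ℝ) : ℝ :=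
  if α = 1 then ∑ i, p i * Real.log (p i / q i)
  else if α < 0 then (1 / (1 - α)) * Real.log (∑ i, rpow0 (p i) α * rpow0 (q i) (1 - α))
  else (1 / (α - 1)) * Real.log (∑ i, rpow0 (p i) α * rpow0 (q i) (1 - α))

/-- The Rényi entropy `H_α(p) = (sgn α / (1-α)) ln ∑ p_i^α`, with `H_1` the Shannon entropy. -/
noncomputable def renyiH {ι : Type*} [Fintype ι] (α : ℝ) (p : ι → ℝ) : ℝ :=
  if α = 1 then -∑ i, p i * Real.log (p i)
  else ((if 0 ≤ α then (1 : ℝ) else -1) / (1 - α)) * Real.log (∑ i, rpow0 (p i) α)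

/-- Trace (total variation) distance between probability vectors. -/
noncomputable def traceDist {ι : Type*} [Fintype ι] (p p' : ι → ℝ) : ℝ :=
  (1 / 2) * ∑ i, |p i - p' i|

/-- Tensor product of two vectors: `(p ⊗ r)_{(i,j)} = p_i r_j`. -/
def tensorVec {ι κ : Type*} (p : ι → ℝ) (r : κ → ℝ) : ι × κ → ℝ :=
  fun x => p x.1 * r x.2

/-- The `n`-fold tensor power of `p`: `(p^{⊗n})_{(i₁,…,iₙ)} = p_{i₁}⋯p_{iₙ}`. -/
def tensorPow {d : ℕ} (p : Fin d → ℝ) (n : ℕ) : (Fin n → Fin d) → ℝ :=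
  fun f => ∏ k, p (f k)

/-- Max-relative entropy `D_∞(p̃‖Q) = ln max_i (p̃_i / Q_i)`. -/
noncomputable def Dmax {ι : Type*} [Fintype ι] (pt Q : ι → ℝ) : ℝ :=
  Real.log (sSup (Set.range fun i => pt i / Q i))

/-- Min-relative entropy `D_0(p̃‖Q) = −ln ∑_{i : p̃_i > 0} Q_i`. -/
noncomputable def Dmin {ι : Type*} [Fintype ι] (pt Q : ι → ℝ) : ℝ :=
  -Real.log (∑ i ∈ Finset.univ.filter (fun i => 0 < pt i), Q i)

/-- Smoothed max-divergence `D_∞^ε(p^{⊗n}‖q^{⊗n})`: infimum of `D_∞(p̃‖q^{⊗n})` over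
probability vectors `p̃` within trace distance `ε` of `p^{⊗n}`. -/
noncomputable def DmaxSmooth {d : ℕ} (ε : ℝ) (n : ℕ) (p q : Fin d → ℝ) : ℝ :=
  sInf {x : ℝ | ∃ pt : (Fin n → Fin d) → ℝ,
    IsProbVec pt ∧ traceDist pt (tensorPow p n) ≤ ε ∧ x = Dmax pt (tensorPow q n)}

/-- Smoothed min-divergence `D_0^ε(p^{⊗n}‖q^{⊗n})`: supremum of `D_0(p̃‖q^{⊗n})` over
probability vectors `p̃` within trace distance `ε` of `p^{⊗n}`. -/
noncomputable def DminSmooth {d : ℕ} (ε : ℝ) (n : ℕ) (p q : Fin d → ℝ) : ℝ :=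
  sSup {x : ℝ | ∃ pt : (Fin n → Fin d) → ℝ,
    IsProbVec pt ∧ traceDist pt (tensorPow p n) ≤ ε ∧ x = Dmin pt (tensorPow q n)}

/-!
By the weak law of large numbers for the log-likelihood ratio, `p^{⊗n}` concentrates on the typical
set, where `p^{⊗n} = exp (n (D₁(p‖q) ± δ)) q^{⊗n}`. Conditioning `p^{⊗n}` on the typical set moves
it by the small mass of the complement, and the conditioned vector has max-divergence at most
`n (D₁(p‖q) + δ) + o(n)`. Conversely, a probability vector within distance `ε < 1` of `p^{⊗n}`
retains mass about `1 - ε` on the typical set, whose `q^{⊗n}`-weight is at most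
`exp (-n (D₁(p‖q) - δ))`, so its max-divergence is at least `n (D₁(p‖q) - δ) - O(1)`. Hence the
inner limit is `D₁(p‖q)` for each `ε ∈ (0, 1)`, not only as `ε → 0`.
-/

section WeakLaw

open MeasureTheory ProbabilityTheory

variable {Ω : Type*} [MeasurableSpace Ω] {μ : Measure Ω} [IsProbabilityMeasure μ] {X : Ω → ℝ}

lemma measureReal_pi_abs_sum_sub_ge_le {ι : Type*} [Fintype ι] (hX : MemLp X 2 μ) {c : ℝ}
    (hc : 0 < c) :
    (Measure.pi fun _ : ι => μ).real {ω | c ≤ |∑ k, X (ω k) - Fintype.card ι * μ[X]|} ≤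
      Fintype.card ι * Var[X; μ] / c ^ 2 := by
  have hXk (k : ι) : MemLp (fun ω : ι → Ω => X (ω k)) 2 (Measure.pi fun _ => μ) :=
    hX.comp_measurePreserving (measurePreserving_eval _ k)
  have hmean : ∫ ω, ∑ k, X (ω k) ∂(Measure.pi fun _ : ι => μ) = Fintype.card ι * μ[X] := by
    rw [integral_finsetSum _ fun k _ => (hXk k).integrable one_le_two]
    simp [integral_comp_eval (μ := fun _ : ι => μ) hX.aestronglyMeasurable]
  have hvar : Var[fun ω => ∑ k, X (ω k); Measure.pi fun _ : ι => μ] =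
      Fintype.card ι * Var[X; μ] := by
    simpa [← Finset.sum_fn] using variance_sum_pi (μ := fun _ : ι => μ) fun _ => hX
  rw [← hmean, ← hvar]
  exact ENNReal.toReal_le_of_le_ofReal (div_nonneg (variance_nonneg _ _) (sq_nonneg c))
    (meas_ge_le_variance_div_sq (memLp_finsetSum _ fun k _ => hXk k) hc)

lemma tendsto_measureReal_pi_abs_sum_sub_ge (hX : MemLp X 2 μ) {δ : ℝ} (hδ : 0 < δ) :
    Tendsto (fun n : ℕ => (Measure.pi fun _ : Fin n => μ).real
      {ω | n * δ ≤ |∑ k, X (ω k) - n * μ[X]|}) atTop (𝓝 0) := by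
  have hlim : Tendsto (fun n : ℕ => Var[X; μ] / δ ^ 2 / n) atTop (𝓝 0) :=
    tendsto_const_div_atTop_nhds_zero_nat _
  refine squeeze_zero' (.of_forall fun _ => measureReal_nonneg) ?_ hlim
  filter_upwards [eventually_gt_atTop 0] with n hn
  have hbound := measureReal_pi_abs_sum_sub_ge_le (ι := Fin n) hX (c := n * δ) (by positivity)
  rw [Fintype.card_fin] at hbound
  exact hbound.trans_eq (by field_simp)

end WeakLaw

section OneShot

variable {ι : Type*} [Fintype ι] {p q r : ι → ℝ} {s : Finset ι} {K ε : ℝ}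

lemma IsProbVec.sum_le_one (hp : IsProbVec p) (s : Finset ι) : ∑ i ∈ s, p i ≤ 1 :=
  hp.2 ▸ Finset.sum_le_univ_sum_of_nonneg hp.1

lemma IsProbVec.exists_pos (hp : IsProbVec p) : ∃ i, 0 < p i := by
  by_contra! h
  linarith [hp.2, Finset.sum_nonpos fun i (_ : i ∈ Finset.univ) => h i]

/-- The probability mass function with weights `p`, through which sums against a probability
vector become integrals. -/
noncomputable def IsProbVec.toPMF (hp : IsProbVec p) : PMF ι :=
  PMF.ofFintype (fun i => ENNReal.ofReal (p i)) <| by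
    rw [← ENNReal.ofReal_sum_of_nonneg fun i _ => hp.1 i, hp.2, ENNReal.ofReal_one]

lemma IsProbVec.toReal_toPMF (hp : IsProbVec p) (i : ι) :
    (hp.toPMF i).toReal = p i :=
  ENNReal.toReal_ofReal (hp.1 i)

lemma sum_sub_sum_le_traceDist (h : ∑ i, r i = ∑ i, p i) (s : Finset ι) :
    ∑ i ∈ s, p i - ∑ i ∈ s, r i ≤ traceDist r p := by
  classical
  have hs : ∑ i ∈ s, (p i - r i) ≤ ∑ i ∈ s, |r i - p i| :=
    Finset.sum_le_sum fun i _ => abs_sub_comm (r i) (p i) ▸ le_abs_self _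
  have hsc : ∑ i ∈ sᶜ, (r i - p i) ≤ ∑ i ∈ sᶜ, |r i - p i| :=
    Finset.sum_le_sum fun i _ => le_abs_self _
  rw [Finset.sum_sub_distrib] at hs hsc
  rw [traceDist]
  linarith [s.sum_add_sum_compl p, s.sum_add_sum_compl r, s.sum_add_sum_compl fun i => |r i - p i|]

lemma traceDist_le_one (hp : IsProbVec p) (hr : IsProbVec r) : traceDist r p ≤ 1 := by
  have h : ∑ i, |r i - p i| ≤ ∑ i, (r i + p i) := Finset.sum_le_sum fun i _ =>
    (abs_sub _ _).trans_eq (by rw [abs_of_nonneg (hr.1 i), abs_of_nonneg (hp.1 i)])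
  rw [Finset.sum_add_distrib, hp.2, hr.2] at h
  rw [traceDist]
  linarith

/-- The vector `p` conditioned on `s`: restricted to `s` and renormalised to total mass one. -/
noncomputable def condVec (p : ι → ℝ) (s : Finset ι) (i : ι) : ℝ :=
  (s : Set ι).indicator p i / ∑ j ∈ s, p j

lemma isProbVec_condVec (hp : ∀ i, 0 ≤ p i) (hs : 0 < ∑ i ∈ s, p i) : IsProbVec (condVec p s) :=
  ⟨fun i => div_nonneg (Set.indicator_nonneg (fun i _ => hp i) i) hs.le, by
    simp only [condVec]
    rw [← Finset.sum_div, Finset.sum_indicator_subset p s.subset_univ, div_self hs.ne']⟩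

lemma traceDist_condVec (hp : IsProbVec p) (hs : 0 < ∑ i ∈ s, p i) :
    traceDist (condVec p s) p = 1 - ∑ i ∈ s, p i := by
  classical
  have hin : ∑ i ∈ s, |condVec p s i - p i| = 1 - ∑ i ∈ s, p i := by
    have habs : ∀ i ∈ s, |condVec p s i - p i| = p i / ∑ j ∈ s, p j - p i := fun i hi => by
      rw [condVec, Set.indicator_of_mem (Finset.mem_coe.2 hi), abs_of_nonneg]
      exact sub_nonneg.2 (le_div_self (hp.1 i) hs (hp.sum_le_one s))
    rw [Finset.sum_congr rfl habs, Finset.sum_sub_distrib, ← Finset.sum_div, div_self hs.ne']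
  have hout : ∑ i ∈ sᶜ, |condVec p s i - p i| = ∑ i ∈ sᶜ, p i :=
    Finset.sum_congr rfl fun i hi => by
      have hi' : i ∉ (s : Set ι) := by simpa using hi
      simp [condVec, Set.indicator_of_notMem hi', abs_of_nonneg (hp.1 i)]
  rw [traceDist, ← s.sum_add_sum_compl, hin, hout]
  linarith [s.sum_add_sum_compl p, hp.2]

lemma le_sSup_range_div_mul {ι : Type*} [Finite ι] {q r : ι → ℝ} (hq : ∀ i, 0 < q i) (i : ι) :
    r i ≤ sSup (Set.range fun i => r i / q i) * q i :=
  (div_le_iff₀ (hq i)).1 (le_csSup (Set.finite_range _).bddAbove ⟨i, rfl⟩)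

lemma log_sum_div_sum_le_Dmax (hq : ∀ i, 0 < q i) (hs : 0 < ∑ i ∈ s, r i) :
    Real.log ((∑ i ∈ s, r i) / ∑ i ∈ s, q i) ≤ Dmax r q := by
  have hqs : 0 < ∑ i ∈ s, q i :=
    Finset.sum_pos (fun i _ => hq i) (Finset.nonempty_of_sum_ne_zero hs.ne')
  refine Real.log_le_log (div_pos hs hqs) ((div_le_iff₀ hqs).2 ?_)
  rw [Finset.mul_sum]
  exact Finset.sum_le_sum fun i _ => le_sSup_range_div_mul hq i

lemma neg_log_sum_le_Dmax (hr : IsProbVec r) (hq : ∀ i, 0 < q i) :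
    -Real.log (∑ i, q i) ≤ Dmax r q := by
  have h := log_sum_div_sum_le_Dmax hq (hr.2.symm ▸ one_pos)
  rwa [hr.2, one_div, Real.log_inv] at h

lemma Dmax_le_log (hq : ∀ i, 0 < q i) (hr : ∃ i, 0 < r i) (h : ∀ i, r i ≤ K * q i) :
    Dmax r q ≤ Real.log K := by
  obtain ⟨i, hi⟩ := hr
  have : Nonempty ι := ⟨i⟩
  refine Real.log_le_log ?_ (csSup_le (Set.range_nonempty _) ?_)
  · exact pos_of_mul_pos_left (hi.trans_le (le_sSup_range_div_mul hq i)) (hq i).le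
  · rintro _ ⟨j, rfl⟩
    exact (div_le_iff₀ (hq j)).2 (h j)

lemma Dmax_condVec_le (hp : ∀ i, 0 ≤ p i) (hq : ∀ i, 0 < q i) (hs : 0 < ∑ i ∈ s, p i)
    (hK : 0 ≤ K) (h : ∀ i ∈ s, p i ≤ K * q i) :
    Dmax (condVec p s) q ≤ Real.log (K / ∑ i ∈ s, p i) := by
  refine Dmax_le_log hq (isProbVec_condVec hp hs).exists_pos fun i => ?_
  rw [condVec, div_mul_eq_mul_div]
  gcongr
  exact Set.indicator_le' h (fun j _ => mul_nonneg hK (hq j).le) i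

lemma log_mul_sub_le_Dmax (hp : IsProbVec p) (hr : IsProbVec r) (hq : ∀ i, 0 < q i) (hK : 0 < K)
    (h : ∀ i ∈ s, K * q i ≤ p i) (hε : ε < ∑ i ∈ s, p i) (hrp : traceDist r p ≤ ε) :
    Real.log (K * (∑ i ∈ s, p i - ε)) ≤ Dmax r q := by
  have hrs : ∑ i ∈ s, p i - ε ≤ ∑ i ∈ s, r i := by
    linarith [sum_sub_sum_le_traceDist (hr.2.trans hp.2.symm) s]
  have hrs_pos : 0 < ∑ i ∈ s, r i := (sub_pos.2 hε).trans_le hrs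
  have hqs : 0 < ∑ i ∈ s, q i :=
    Finset.sum_pos (fun i _ => hq i) (Finset.nonempty_of_sum_ne_zero hrs_pos.ne')
  have hKqs : K * ∑ i ∈ s, q i ≤ 1 := by
    rw [Finset.mul_sum]
    exact (Finset.sum_le_sum h).trans (hp.sum_le_one s)
  refine (Real.log_le_log (mul_pos hK (sub_pos.2 hε)) ?_).trans
    (log_sum_div_sum_le_Dmax hq hrs_pos)
  rw [le_div_iff₀ hqs]
  calc K * (∑ i ∈ s, p i - ε) * ∑ i ∈ s, q i
      = (K * ∑ i ∈ s, q i) * (∑ i ∈ s, p i - ε) := by ring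
    _ ≤ 1 * (∑ i ∈ s, p i - ε) := by gcongr
    _ ≤ ∑ i ∈ s, r i := by rwa [one_mul]

end OneShot

section TensorPow

open MeasureTheory

variable {d n : ℕ} {p : Fin d → ℝ}

lemma tensorPow_pos (hp : ∀ i, 0 < p i) (n : ℕ) (f : Fin n → Fin d) : 0 < tensorPow p n f :=
  Finset.prod_pos fun _ _ => hp _

lemma sum_tensorPow (p : Fin d → ℝ) (n : ℕ) : ∑ f, tensorPow p n f = (∑ i, p i) ^ n :=
  (Fintype.sum_pow p n).symm

lemma isProbVec_tensorPow (hp : IsProbVec p) (n : ℕ) : IsProbVec (tensorPow p n) :=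
  ⟨fun _ => Finset.prod_nonneg fun _ _ => hp.1 _, by rw [sum_tensorPow, hp.2, one_pow]⟩

lemma measureReal_pi_toPMF (hp : IsProbVec p) (s : Finset (Fin n → Fin d)) :
    (Measure.pi fun _ : Fin n => hp.toPMF.toMeasure).real s = ∑ f ∈ s, tensorPow p n f := by
  rw [← sum_measureReal_singleton]
  refine Finset.sum_congr rfl fun f _ => ?_
  simp [measureReal_def, Measure.pi_singleton, tensorPow, ENNReal.toReal_prod,
    hp.toReal_toPMF]

lemma tendsto_sum_tensorPow_abs_sum_sub_ge (hp : IsProbVec p) (X : Fin d → ℝ) {δ : ℝ}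
    (hδ : 0 < δ) :
    Tendsto (fun n : ℕ => ∑ f : Fin n → Fin d with
      n * δ ≤ |∑ k, X (f k) - n * ∑ i, p i * X i|, tensorPow p n f) atTop (𝓝 0) := by
  have hmean : ∫ i, X i ∂hp.toPMF.toMeasure = ∑ i, p i * X i := by
    simp [PMF.integral_eq_sum, hp.toReal_toPMF]
  have hlaw := tendsto_measureReal_pi_abs_sum_sub_ge
    (MemLp.of_discrete (f := X) (μ := hp.toPMF.toMeasure)) hδ
  refine hlaw.congr fun n => ?_
  rw [← measureReal_pi_toPMF hp, hmean, Finset.coe_filter_univ]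

end TensorPow

section TypicalSet

variable {d n : ℕ} {p q : Fin d → ℝ} {δ : ℝ}

lemma renyiD_one {ι : Type*} [Fintype ι] (p q : ι → ℝ) :
    renyiD 1 p q = ∑ i, p i * Real.log (p i / q i) :=
  if_pos rfl

/-- The relative-entropy typical set: the sequences of length `n` whose likelihood ratio
`p^{⊗n} / q^{⊗n}` equals `exp (n * D₁(p‖q))` up to a factor `exp (n * δ)`. -/
noncomputable def typicalSet (p q : Fin d → ℝ) (n : ℕ) (δ : ℝ) : Finset (Fin n → Fin d) :=
  {f | Real.exp (n * (renyiD 1 p q - δ)) * tensorPow q n f ≤ tensorPow p n f ∧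
    tensorPow p n f ≤ Real.exp (n * (renyiD 1 p q + δ)) * tensorPow q n f}

lemma tensorPow_eq_exp_mul (hp : ∀ i, 0 ≤ p i) (hq : ∀ i, 0 < q i) {f : Fin n → Fin d}
    (hf : tensorPow p n f ≠ 0) :
    tensorPow p n f = Real.exp (∑ k, Real.log (p (f k) / q (f k))) * tensorPow q n f := by
  rw [Real.exp_sum, tensorPow, tensorPow, ← Finset.prod_mul_distrib]
  refine Finset.prod_congr rfl fun k hk => ?_
  have hpk : 0 < p (f k) := (hp _).lt_of_ne' (Finset.prod_ne_zero_iff.1 hf k hk)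
  rw [Real.exp_log (div_pos hpk (hq _)), div_mul_cancel₀ _ (hq _).ne']

lemma mem_typicalSet_of_abs_le (hp : ∀ i, 0 ≤ p i) (hq : ∀ i, 0 < q i) {f : Fin n → Fin d}
    (hf : tensorPow p n f ≠ 0)
    (h : |∑ k, Real.log (p (f k) / q (f k)) - n * renyiD 1 p q| ≤ n * δ) :
    f ∈ typicalSet p q n δ := by
  have hqf := (tensorPow_pos hq n f).le
  obtain ⟨hlo, hhi⟩ := abs_le.1 h
  rw [typicalSet, Finset.mem_filter_univ, tensorPow_eq_exp_mul hp hq hf]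
  constructor <;> gcongr <;> linarith

lemma sum_compl_typicalSet_le (hp : ∀ i, 0 ≤ p i) (hq : ∀ i, 0 < q i) (n : ℕ) (δ : ℝ) :
    ∑ f ∈ (typicalSet p q n δ)ᶜ, tensorPow p n f ≤ ∑ f : Fin n → Fin d with
      n * δ ≤ |∑ k, Real.log (p (f k) / q (f k)) - n * renyiD 1 p q|, tensorPow p n f := by
  rw [← Finset.sum_filter_ne_zero]
  refine Finset.sum_le_sum_of_subset_of_nonneg (fun f hf => ?_) fun f _ _ =>
    Finset.prod_nonneg fun _ _ => hp _
  obtain ⟨hfc, hf0⟩ := Finset.mem_filter.1 hf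
  rw [Finset.mem_filter_univ]
  by_contra! hlt
  exact Finset.mem_compl.1 hfc (mem_typicalSet_of_abs_le hp hq hf0 hlt.le)

lemma tendsto_sum_typicalSet (hp : IsProbVec p) (hq : ∀ i, 0 < q i) (hδ : 0 < δ) :
    Tendsto (fun n => ∑ f ∈ typicalSet p q n δ, tensorPow p n f) atTop (𝓝 1) := by
  have hdev : Tendsto (fun n : ℕ => ∑ f : Fin n → Fin d with
      n * δ ≤ |∑ k, Real.log (p (f k) / q (f k)) - n * renyiD 1 p q|, tensorPow p n f)
      atTop (𝓝 0) := by
    simpa only [renyiD_one] using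
      tendsto_sum_tensorPow_abs_sum_sub_ge hp (fun i => Real.log (p i / q i)) hδ
  have hcompl := squeeze_zero (fun n => Finset.sum_nonneg fun f _ => (isProbVec_tensorPow hp n).1 f)
    (fun n => sum_compl_typicalSet_le hp.1 hq n δ) hdev
  refine (sub_zero (1 : ℝ) ▸ hcompl.const_sub 1).congr fun n => ?_
  rw [← (isProbVec_tensorPow hp n).2, ← Finset.sum_add_sum_compl (typicalSet p q n δ),
    add_sub_cancel_right]

end TypicalSet

section DmaxSmooth

variable {d n : ℕ} {p q : Fin d → ℝ} {ε δ : ℝ}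

lemma DmaxSmooth_le (hq : ∀ i, 0 < q i) {r : (Fin n → Fin d) → ℝ} (hr : IsProbVec r)
    (hrp : traceDist r (tensorPow p n) ≤ ε) : DmaxSmooth ε n p q ≤ Dmax r (tensorPow q n) := by
  refine csInf_le ⟨-Real.log (∑ f, tensorPow q n f), ?_⟩ ⟨r, hr, hrp, rfl⟩
  rintro _ ⟨r', hr', -, rfl⟩
  exact neg_log_sum_le_Dmax hr' (tensorPow_pos hq n)

lemma le_DmaxSmooth (hp : IsProbVec p) (hε : 0 ≤ ε) {x : ℝ}
    (h : ∀ r, IsProbVec r → traceDist r (tensorPow p n) ≤ ε → x ≤ Dmax r (tensorPow q n)) :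
    x ≤ DmaxSmooth ε n p q := by
  refine le_csInf ⟨_, tensorPow p n, isProbVec_tensorPow hp n, by simpa [traceDist], rfl⟩ ?_
  rintro _ ⟨r, hr, hrp, rfl⟩
  exact h r hr hrp

lemma DmaxSmooth_le_of_typicalSet (hp : IsProbVec p) (hq : ∀ i, 0 < q i)
    (hs_pos : 0 < ∑ f ∈ typicalSet p q n δ, tensorPow p n f)
    (hs : 1 - ε ≤ ∑ f ∈ typicalSet p q n δ, tensorPow p n f) :
    DmaxSmooth ε n p q ≤ n * (renyiD 1 p q + δ) -
      Real.log (∑ f ∈ typicalSet p q n δ, tensorPow p n f) := by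
  have hP := isProbVec_tensorPow hp n
  have hdist : traceDist (condVec (tensorPow p n) (typicalSet p q n δ)) (tensorPow p n) ≤ ε := by
    rw [traceDist_condVec hP hs_pos]
    linarith
  calc DmaxSmooth ε n p q
      ≤ Dmax (condVec (tensorPow p n) (typicalSet p q n δ)) (tensorPow q n) :=
        DmaxSmooth_le hq (isProbVec_condVec hP.1 hs_pos) hdist
    _ ≤ Real.log (Real.exp (n * (renyiD 1 p q + δ)) /
          ∑ f ∈ typicalSet p q n δ, tensorPow p n f) :=
        Dmax_condVec_le hP.1 (tensorPow_pos hq n) hs_pos (Real.exp_pos _).le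
          fun f hf => ((Finset.mem_filter_univ f).1 hf).2
    _ = n * (renyiD 1 p q + δ) - Real.log (∑ f ∈ typicalSet p q n δ, tensorPow p n f) := by
        rw [Real.log_div (Real.exp_pos _).ne' hs_pos.ne', Real.log_exp]

lemma le_DmaxSmooth_of_typicalSet (hp : IsProbVec p) (hq : ∀ i, 0 < q i) (hε : 0 ≤ ε)
    (hs : ε < ∑ f ∈ typicalSet p q n δ, tensorPow p n f) :
    n * (renyiD 1 p q - δ) + Real.log (∑ f ∈ typicalSet p q n δ, tensorPow p n f - ε) ≤
      DmaxSmooth ε n p q := by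
  refine le_DmaxSmooth hp hε fun r hr hrp => ?_
  rw [← Real.log_exp (n * (renyiD 1 p q - δ)),
    ← Real.log_mul (Real.exp_pos _).ne' (sub_pos.2 hs).ne']
  exact log_mul_sub_le_Dmax (isProbVec_tensorPow hp n) hr (tensorPow_pos hq n) (Real.exp_pos _)
    (fun f hf => ((Finset.mem_filter_univ f).1 hf).1) hs hrp

lemma eventually_lt_DmaxSmooth_div (hp : IsProbVec p) (hq : ∀ i, 0 < q i) (hε : 0 ≤ ε)
    (hε1 : ε < 1) {a : ℝ} (ha : a < renyiD 1 p q) :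
    ∀ᶠ n : ℕ in atTop, a < DmaxSmooth ε n p q / n := by
  obtain ⟨b, hab, hb⟩ := exists_between ha
  have hmass := tendsto_sum_typicalSet hp hq (sub_pos.2 hb)
  have hlim := ((((hmass.sub_const ε).log (sub_pos.2 hε1).ne').div_atTop
    tendsto_natCast_atTop_atTop).const_add b)
  rw [add_zero] at hlim
  filter_upwards [hlim.eventually_const_lt hab, hmass.eventually_const_lt hε1,
    eventually_gt_atTop 0] with n hn hs hn0
  refine hn.trans_le ?_
  have hbound := le_DmaxSmooth_of_typicalSet hp hq hε hs
  rw [sub_sub_cancel] at hbound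
  rw [le_div_iff₀ (by positivity), add_mul, div_mul_cancel₀ _ (by positivity)]
  linarith

lemma eventually_DmaxSmooth_div_lt (hp : IsProbVec p) (hq : ∀ i, 0 < q i) (hε : 0 < ε) {a : ℝ}
    (ha : renyiD 1 p q < a) : ∀ᶠ n : ℕ in atTop, DmaxSmooth ε n p q / n < a := by
  obtain ⟨b, hb, hba⟩ := exists_between ha
  have hmass := tendsto_sum_typicalSet hp hq (sub_pos.2 hb)
  have hlim := (((hmass.log one_ne_zero).div_atTop tendsto_natCast_atTop_atTop).const_sub b)
  rw [sub_zero] at hlim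
  filter_upwards [hlim.eventually_lt_const hba, hmass.eventually_const_lt one_pos,
    hmass.eventually_const_le (sub_lt_self 1 hε), eventually_gt_atTop 0] with n hn hs_pos hs hn0
  refine lt_of_le_of_lt ?_ hn
  have hbound := DmaxSmooth_le_of_typicalSet hp hq hs_pos hs
  rw [add_sub_cancel] at hbound
  rw [div_le_iff₀ (by positivity), sub_mul, div_mul_cancel₀ _ (by positivity)]
  linarith

theorem tendsto_DmaxSmooth_div (hp : IsProbVec p) (hq : ∀ i, 0 < q i) (hε : 0 < ε) (hε1 : ε < 1) :
    Tendsto (fun n : ℕ => DmaxSmooth ε n p q / n) atTop (𝓝 (renyiD 1 p q)) :=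
  tendsto_order.2 ⟨fun _ ha => eventually_lt_DmaxSmooth_div hp hq hε.le hε1 ha,
    fun _ ha => eventually_DmaxSmooth_div_lt hp hq hε ha⟩

/- Every probability vector is within trace distance one of `p^{⊗n}`, so the infimum is attained at
the normalisation of `q^{⊗n}`. -/
lemma DmaxSmooth_of_one_le (hp : IsProbVec p) (hq : ∀ i, 0 < q i) (hε : 1 ≤ ε) (n : ℕ) :
    DmaxSmooth ε n p q = -(n * Real.log (∑ i, q i)) := by
  obtain ⟨i, -⟩ := hp.exists_pos
  have hQ := tensorPow_pos hq n
  have hQ_sum : 0 < ∑ f, tensorPow q n f := Finset.sum_pos (fun f _ => hQ f) ⟨fun _ => i, by simp⟩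
  have hr := isProbVec_condVec (fun f => (hQ f).le) hQ_sum
  rw [← Real.log_pow, ← sum_tensorPow]
  apply le_antisymm
  · have hdist := (traceDist_le_one (isProbVec_tensorPow hp n) hr).trans hε
    have h := Dmax_condVec_le (fun f => (hQ f).le) hQ hQ_sum zero_le_one fun f _ => (one_mul _).ge
    rw [one_div, Real.log_inv] at h
    exact (DmaxSmooth_le hq hr hdist).trans h
  · exact le_DmaxSmooth hp (zero_le_one.trans hε) fun r hr _ => neg_log_sum_le_Dmax hr hQ

lemma tendsto_DmaxSmooth_div_of_one_le (hp : IsProbVec p) (hq : ∀ i, 0 < q i) (hε : 1 ≤ ε) :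
    Tendsto (fun n : ℕ => DmaxSmooth ε n p q / n) atTop (𝓝 (-Real.log (∑ i, q i))) := by
  refine tendsto_const_nhds.congr' ?_
  filter_upwards [eventually_ne_atTop 0] with n hn
  rw [DmaxSmooth_of_one_le hp hq hε]
  field_simp

end DmaxSmooth

theorem smoothed_Dmax_iid_limit_general {d : ℕ} (p q : Fin d → ℝ)
    (hp : IsProbVec p) (hqpos : ∀ i, 0 < q i) :
    ∃ L : ℝ → ℝ,
      (∀ ε : ℝ, 0 < ε →
        Tendsto (fun n : ℕ => DmaxSmooth ε n p q / (n : ℝ)) atTop (𝓝 (L ε))) ∧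
      Tendsto L (𝓝[>] (0 : ℝ)) (𝓝 (∑ i, p i * Real.log (p i / q i))) := by
  refine ⟨fun ε => if ε < 1 then renyiD 1 p q else -Real.log (∑ i, q i), fun ε hε => ?_, ?_⟩
  · dsimp only
    split_ifs with hε1
    · exact tendsto_DmaxSmooth_div hp hqpos hε hε1
    · exact tendsto_DmaxSmooth_div_of_one_le hp hqpos (not_lt.1 hε1)
  · rw [← renyiD_one]
    have hlt : ∀ᶠ ε : ℝ in 𝓝[>] 0, ε < 1 := nhdsWithin_le_nhds (Iio_mem_nhds one_pos)
    exact tendsto_const_nhds.congr' (hlt.mono fun ε hε => (if_pos hε).symm)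

/-- **Asymptotic equipartition for the smoothed max-divergence (Eq. (30), `α = ∞`).**
`lim_{ε→0⁺} lim_{n→∞} (1/n) D_∞^ε(p^{⊗n}‖q^{⊗n}) = D_1(p‖q)`. -/
theorem smoothed_Dmax_iid_limit {d : ℕ} (p q : Fin d → ℝ)
    (hp : IsProbVec p) (hq : IsProbVec q)
    (hppos : ∀ i, 0 < p i) (hqpos : ∀ i, 0 < q i) :
    ∃ L : ℝ → ℝ,
      (∀ ε : ℝ, 0 < ε →
        Filter.Tendsto (fun n : ℕ => DmaxSmooth ε n p q / (n : ℝ))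
          Filter.atTop (𝓝 (L ε))) ∧
      Filter.Tendsto L (𝓝[>] (0 : ℝ)) (𝓝 (∑ i, p i * Real.log (p i / q i))) :=
  smoothed_Dmax_iid_limit_general p q hp hqpos
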